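/- arXiv:1210.6064 — 3 statements merged into one kernel-verified Lean document; each statement's English description precedes it below -/
import Mathlib

section
/- Let σ : [0,∞) → ℝ be continuous. Then lim_{t→∞} ∫_0^t e^{−2(t−s)} σ(s)² ds = 0 if and only if lim_{t→∞} ∫_t^{t+1} σ(s)² ds = 0. -/
open MeasureTheory Filter Set

lemma aux_rec (F G : ℝ → ℝ) (hF0 : ∀ t, 0 ≤ t → 0 ≤ F t)
    (hrec : ∀ t, 0 ≤ t → F (t + 1) ≤ F t / 2 + G t)
    (hb : ∀ T, 0 ≤ T → ∃ C, ∀ t, T ≤ t → t ≤ T + 1 → F t ≤ C)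
    (hG : Tendsto G atTop (nhds 0)) : Tendsto F atTop (nhds 0) := by
  rw [Metric.tendsto_atTop] at hG ⊢
  intro ε hε
  obtain ⟨T0, hT0⟩ := hG (ε / 4) (by linarith)
  set T := max T0 0 with hT
  have hTn : 0 ≤ T := le_max_right _ _
  obtain ⟨C, hC⟩ := hb T hTn
  have hind : ∀ n : ℕ, ∀ t, T ≤ t → t ≤ T + 1 → F (t + n) ≤ C * (1 / 2) ^ n + ε / 2 := by
    intro n
    induction n with
    | zero =>
      intro t h1 h2
      have := hC t h1 h2
      simp only [Nat.cast_zero, add_zero, pow_zero, mul_one]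
      linarith
    | succ k ih =>
      intro t h1 h2
      have h3 := ih t h1 h2
      have hk : (0 : ℝ) ≤ k := Nat.cast_nonneg k
      have h4 := hrec (t + k) (by linarith)
      have h5 := hT0 (t + k) (by have := le_max_left T0 0; linarith)
      rw [Real.dist_eq, sub_zero] at h5
      have h6 := (abs_lt.mp h5).2
      push_cast
      rw [← add_assoc, pow_succ]
      linarith
  have hlim : Tendsto (fun n : ℕ => C * (1 / 2 : ℝ) ^ n) atTop (nhds 0) := by
    have := (tendsto_pow_atTop_nhds_zero_of_lt_one (r := (1 / 2 : ℝ)) (by norm_num) (by norm_num)).const_mul C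
    simpa using this
  rw [Metric.tendsto_atTop] at hlim
  obtain ⟨N, hN⟩ := hlim (ε / 2) (by linarith)
  refine ⟨T + N, fun t ht => ?_⟩
  have hN0 : (0 : ℝ) ≤ N := Nat.cast_nonneg N
  have hn1 := Nat.floor_le (show 0 ≤ t - T by linarith)
  have hn2 := Nat.lt_floor_add_one (t - T)
  have hn3 : N ≤ ⌊t - T⌋₊ := Nat.le_floor (by linarith)
  have h1 := hind ⌊t - T⌋₊ (t - ⌊t - T⌋₊) (by linarith) (by linarith)
  rw [sub_add_cancel] at h1
  have h2 := hN _ hn3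
  rw [Real.dist_eq, sub_zero] at h2 ⊢
  have h3 := (abs_lt.mp h2).2
  rw [abs_of_nonneg (hF0 t (by linarith))]
  linarith

/-- For continuous `σ : [0,∞) → ℝ`, `∫_0^t e^{−2(t−s)} σ(s)² ds → 0` as `t → ∞`
if and only if `∫_t^{t+1} σ(s)² ds → 0` as `t → ∞`. -/
theorem stmt4 (σ : ℝ → ℝ) (hσ : ContinuousOn σ (Set.Ici (0 : ℝ))) :
    Tendsto (fun t : ℝ => ∫ s in (0 : ℝ)..t, Real.exp (-(2 * (t - s))) * σ s ^ 2)
      atTop (nhds 0)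
    ↔
    Tendsto (fun t : ℝ => ∫ s in t..(t + 1), σ s ^ 2) atTop (nhds 0) := by
  have hi1 : ∀ a b : ℝ, 0 ≤ a → a ≤ b →
      IntervalIntegrable (fun s => σ s ^ 2) volume a b := by
    intro a b ha hab
    apply ContinuousOn.intervalIntegrable
    rw [uIcc_of_le hab]
    exact (hσ.mono (fun x hx => ha.trans hx.1)).pow 2
  have hi2 : ∀ t a b : ℝ, 0 ≤ a → a ≤ b →
      IntervalIntegrable (fun s => Real.exp (-(2 * (t - s))) * σ s ^ 2) volume a b := by
    intro t a b ha hab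
    apply ContinuousOn.intervalIntegrable
    rw [uIcc_of_le hab]
    exact (Continuous.continuousOn (by fun_prop)).mul
      ((hσ.mono (fun x hx => ha.trans hx.1)).pow 2)
  have hle : ∀ t a b : ℝ, 0 ≤ a → a ≤ b → b ≤ t →
      ∫ s in a..b, Real.exp (-(2 * (t - s))) * σ s ^ 2 ≤ ∫ s in a..b, σ s ^ 2 := by
    intro t a b ha hab hbt
    apply intervalIntegral.integral_mono_on hab (hi2 t a b ha hab) (hi1 a b ha hab)
    intro s hs
    have : Real.exp (-(2 * (t - s))) ≤ 1 := Real.exp_le_one_iff.mpr (by linarith [hs.2])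
    exact mul_le_of_le_one_left (sq_nonneg _) this
  have hn2 : ∀ t a b : ℝ, a ≤ b →
      0 ≤ ∫ s in a..b, Real.exp (-(2 * (t - s))) * σ s ^ 2 := fun t a b hab =>
    intervalIntegral.integral_nonneg hab (fun s _ => by positivity)
  have hn1 : ∀ a b : ℝ, a ≤ b → 0 ≤ ∫ s in a..b, σ s ^ 2 := fun a b hab =>
    intervalIntegral.integral_nonneg hab (fun s _ => by positivity)
  constructor
  · intro h
    have h1 := (h.comp (tendsto_atTop_add_const_right atTop (1 : ℝ) tendsto_id)).const_mul
      (Real.exp 2)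
    rw [mul_zero] at h1
    refine tendsto_of_tendsto_of_tendsto_of_le_of_le' tendsto_const_nhds h1
      (Eventually.of_forall fun t => hn1 t (t + 1) (by linarith)) ?_
    filter_upwards [eventually_ge_atTop (0 : ℝ)] with t ht
    simp only [Function.comp, id]
    rw [← intervalIntegral.integral_add_adjacent_intervals (hi2 (t + 1) 0 t le_rfl ht)
      (hi2 (t + 1) t (t + 1) ht (by linarith))]
    have h2 := hn2 (t + 1) 0 t ht
    have h3 : ∫ s in t..(t + 1), σ s ^ 2 ≤
        Real.exp 2 * ∫ s in t..(t + 1), Real.exp (-(2 * (t + 1 - s))) * σ s ^ 2 := by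
      rw [← intervalIntegral.integral_const_mul]
      apply intervalIntegral.integral_mono_on (by linarith) (hi1 _ _ ht (by linarith))
        ((hi2 _ _ _ ht (by linarith)).const_mul _)
      intro s hs
      rw [← mul_assoc, ← Real.exp_add]
      exact le_mul_of_one_le_left (sq_nonneg _) (Real.one_le_exp (by linarith [hs.1]))
    have := mul_nonneg (Real.exp_pos 2).le h2
    rw [mul_add]
    linarith
  · intro h
    refine aux_rec _ _ (fun t ht => hn2 t 0 t ht) ?_ ?_ h
    · intro t ht
      rw [← intervalIntegral.integral_add_adjacent_intervals (hi2 (t + 1) 0 t le_rfl ht)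
        (hi2 (t + 1) t (t + 1) ht (by linarith))]
      refine add_le_add ?_ (hle _ _ _ ht (by linarith) le_rfl)
      have h1 : ∀ s, Real.exp (-(2 * (t + 1 - s))) * σ s ^ 2
          = Real.exp (-2) * (Real.exp (-(2 * (t - s))) * σ s ^ 2) := by
        intro s
        rw [← mul_assoc, ← Real.exp_add]
        ring_nf
      simp only [h1]
      rw [intervalIntegral.integral_const_mul]
      have h2 : Real.exp (-2) ≤ 1 / 2 := by
        rw [Real.exp_neg, ← one_div]
        apply one_div_le_one_div_of_le (by norm_num)
        linarith [Real.add_one_le_exp (2 : ℝ)]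
      have := mul_le_mul_of_nonneg_right h2 (hn2 t 0 t ht)
      linarith
    · intro T hT
      refine ⟨∫ s in (0 : ℝ)..(T + 1), σ s ^ 2, fun t h1 h2 => ?_⟩
      have h0 : 0 ≤ t := hT.trans h1
      refine (hle t 0 t le_rfl h0 le_rfl).trans ?_
      rw [← intervalIntegral.integral_add_adjacent_intervals (hi1 0 t le_rfl h0) (hi1 t (T + 1) h0 h2)]
      linarith [hn1 t (T + 1) h2]
end

section
/- Let σ : [0,∞) → ℝ be continuous and suppose that (log t) · ∫_t^{t+1} σ(s)² ds converges as t → ∞ to a limit L ∈ (0, ∞] (i.e. L is strictly positive, possibly +∞). Then liminf_{t→∞} (log t) · ∫_0^t e^{−2(t−s)} σ(s)² ds > 0 (the liminf belongs to (0, ∞]). -/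
open MeasureTheory Filter Set

/-- If `σ : [0,∞) → ℝ` is continuous and `(log t) · ∫_t^{t+1} σ(s)² ds` converges as
`t → ∞` to a limit `L ∈ (0, ∞]` (in the extended reals), then
`liminf_{t→∞} (log t) · ∫_0^t e^{−2(t−s)} σ(s)² ds > 0` (as an extended real, i.e.
the liminf lies in `(0, ∞]`). -/
theorem stmt5 (σ : ℝ → ℝ) (hσ : ContinuousOn σ (Set.Ici (0 : ℝ)))
    (L : EReal) (hL : 0 < L)
    (hlim : Tendsto
      (fun t : ℝ => ((Real.log t * ∫ s in t..(t + 1), σ s ^ 2 : ℝ) : EReal))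
      atTop (nhds L)) :
    0 < liminf
      (fun t : ℝ =>
        ((Real.log t * ∫ s in (0 : ℝ)..t, Real.exp (-(2 * (t - s))) * σ s ^ 2 : ℝ) : EReal))
      atTop := by
  obtain ⟨c, hc0, hcL⟩ := EReal.lt_iff_exists_real_btwn.1 hL
  have hc : 0 < c := by exact_mod_cast hc0
  have h1 : ∀ᶠ t : ℝ in atTop, c < Real.log t * ∫ s in t..(t + 1), σ s ^ 2 := by
    filter_upwards [hlim.eventually (lt_mem_nhds hcL)] with t ht
    exact_mod_cast ht
  have h2 : ∀ᶠ t : ℝ in atTop,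
      c < Real.log (t - 1) * ∫ s in (t - 1)..(t - 1 + 1), σ s ^ 2 :=
    (tendsto_atTop_add_const_right atTop (-1 : ℝ) tendsto_id).eventually h1
  have hpos : (0 : EReal) < ((Real.exp (-2) * c : ℝ) : EReal) := by
    exact_mod_cast mul_pos (Real.exp_pos _) hc
  refine lt_of_lt_of_le hpos (le_liminf_of_le (by isBoundedDefault) ?_)
  filter_upwards [h2, eventually_ge_atTop (2 : ℝ)] with t ht ht2
  rw [sub_add_cancel] at ht
  have hint : ∀ a b : ℝ, 0 ≤ a → a ≤ b →
      IntervalIntegrable (fun s => σ s ^ 2) volume a b := by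
    intro a b ha hab
    apply ContinuousOn.intervalIntegrable
    rw [uIcc_of_le hab]
    exact (hσ.mono (fun x hx => le_trans ha hx.1)).pow 2
  have hint2 : ∀ a b : ℝ, 0 ≤ a → a ≤ b →
      IntervalIntegrable (fun s => Real.exp (-(2 * (t - s))) * σ s ^ 2) volume a b := by
    intro a b ha hab
    apply (hint a b ha hab).continuousOn_mul
    fun_prop
  have hA : Real.exp (-2) * ∫ s in (t - 1)..t, σ s ^ 2 ≤
      ∫ s in (t - 1)..t, Real.exp (-(2 * (t - s))) * σ s ^ 2 := by
    rw [← intervalIntegral.integral_const_mul]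
    apply intervalIntegral.integral_mono_on (by linarith)
      ((hint _ _ (by linarith) (by linarith)).const_mul _)
      (hint2 _ _ (by linarith) (by linarith))
    intro s hs
    apply mul_le_mul_of_nonneg_right _ (sq_nonneg _)
    apply Real.exp_le_exp.2
    linarith [hs.1]
  have hB : 0 ≤ ∫ s in (0 : ℝ)..(t - 1), Real.exp (-(2 * (t - s))) * σ s ^ 2 :=
    intervalIntegral.integral_nonneg (by linarith) (fun s _ => by positivity)
  have hC := intervalIntegral.integral_add_adjacent_intervals
    (hint2 0 (t - 1) le_rfl (by linarith)) (hint2 (t - 1) t (by linarith) (by linarith))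
  have hI : 0 ≤ ∫ s in (t - 1)..t, σ s ^ 2 :=
    intervalIntegral.integral_nonneg (by linarith) (fun s _ => sq_nonneg _)
  have hlog : Real.log (t - 1) ≤ Real.log t := Real.log_le_log (by linarith) (by linarith)
  have hlog0 : 0 ≤ Real.log t := Real.log_nonneg (by linarith)
  have hfin : Real.exp (-2) * c ≤
      Real.log t * ∫ s in (0 : ℝ)..t, Real.exp (-(2 * (t - s))) * σ s ^ 2 :=
    calc Real.exp (-2) * c
        ≤ Real.exp (-2) * (Real.log t * ∫ s in (t - 1)..t, σ s ^ 2) :=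
          mul_le_mul_of_nonneg_left
            (ht.le.trans (mul_le_mul_of_nonneg_right hlog hI)) (Real.exp_pos _).le
      _ = Real.log t * (Real.exp (-2) * ∫ s in (t - 1)..t, σ s ^ 2) := by ring
      _ ≤ _ := mul_le_mul_of_nonneg_left (by linarith) hlog0
  exact_mod_cast hfin
end

section
/- Let σ : [0,∞) → ℝ be continuous and suppose lim_{t→∞} (log t) · ∫_t^{t+1} σ(s)² ds = 0. Then lim_{t→∞} (log t) · ∫_0^t e^{−2(t−s)} σ(s)² ds = 0. -/
open MeasureTheory Filter Set

lemma aux_G (G : ℝ → ℝ) (h0 : ∀ t, 1 ≤ t → 0 ≤ G t)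
    (hb : ∀ T, 1 ≤ T → ∃ M, ∀ t ∈ Set.Icc T (T + 1), G t ≤ M)
    (hr : ∀ ε > 0, ∀ᶠ t in atTop, G (t + 1) ≤ G t / 2 + ε) :
    Tendsto G atTop (nhds 0) := by
  rw [Metric.tendsto_atTop']
  intro ε hε
  obtain ⟨T0, hT0⟩ := eventually_atTop.1 (hr (ε / 4) (by positivity))
  set T := max T0 1 with hT
  have hT1 : 1 ≤ T := le_max_right _ _
  have hTT : T0 ≤ T := le_max_left _ _
  obtain ⟨M, hM⟩ := hb T hT1
  have key : ∀ n : ℕ, ∀ t ∈ Set.Icc T (T + 1), G (t + n) ≤ M * (1 / 2) ^ n + ε / 2 := by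
    intro n t ht
    induction n with
    | zero => have := hM t ht; simp; linarith
    | succ k ih =>
      have hk : (0 : ℝ) ≤ k := Nat.cast_nonneg k
      have := hT0 (t + k) (by linarith [ht.1])
      push_cast
      rw [← add_assoc, pow_succ]
      linarith
  have lim : Tendsto (fun t : ℝ => M * (1 / 2 : ℝ) ^ (⌊t - T⌋₊)) atTop (nhds 0) := by
    have h1 : Tendsto (fun t : ℝ => ⌊t - T⌋₊) atTop atTop :=
      tendsto_nat_floor_atTop.comp (tendsto_atTop_add_const_right _ (-T) tendsto_id)
    have h2 := (tendsto_pow_atTop_nhds_zero_of_lt_one (r := (1 / 2 : ℝ))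
      (by norm_num) (by norm_num)).comp h1
    simpa using h2.const_mul M
  have hev := lim.eventually (gt_mem_nhds (show (0 : ℝ) < ε / 2 by positivity))
  obtain ⟨S, hS⟩ := eventually_atTop.1 hev
  refine ⟨max S T, fun t ht => ?_⟩
  have htS : S ≤ t := (le_max_left _ _).trans ht.le
  have htT : T ≤ t := (le_max_right _ _).trans ht.le
  have h3 := hS t htS
  have h4 := Nat.floor_le (show 0 ≤ t - T by linarith)
  have h5 := Nat.lt_floor_add_one (t - T)
  have h6 := key ⌊t - T⌋₊ (t - ⌊t - T⌋₊) ⟨by linarith, by linarith⟩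
  rw [sub_add_cancel] at h6
  rw [Real.dist_eq, sub_zero, abs_of_nonneg (h0 t (hT1.trans htT))]
  linarith

/-- If `σ : [0,∞) → ℝ` is continuous and `(log t) · ∫_t^{t+1} σ(s)² ds → 0` as `t → ∞`,
then `(log t) · ∫_0^t e^{−2(t−s)} σ(s)² ds → 0` as `t → ∞`. -/
theorem stmt6 (σ : ℝ → ℝ) (hσ : ContinuousOn σ (Set.Ici (0 : ℝ)))
    (h : Tendsto (fun t : ℝ => Real.log t * ∫ s in t..(t + 1), σ s ^ 2) atTop (nhds 0)) :
    Tendsto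
      (fun t : ℝ => Real.log t * ∫ s in (0 : ℝ)..t, Real.exp (-(2 * (t - s))) * σ s ^ 2)
      atTop (nhds 0) := by
  have hc2 : ContinuousOn (fun s => σ s ^ 2) (Set.Ici (0 : ℝ)) := hσ.pow 2
  have hsub : ∀ a b : ℝ, 0 ≤ a → 0 ≤ b → Set.uIcc a b ⊆ Set.Ici 0 := by
    intro a b ha hb x hx
    exact (le_min ha hb).trans hx.1
  have i1 : ∀ a b : ℝ, 0 ≤ a → 0 ≤ b → IntervalIntegrable (fun s => σ s ^ 2) volume a b :=
    fun a b ha hb => (hc2.mono (hsub a b ha hb)).intervalIntegrable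
  have i2 : ∀ t a b : ℝ, 0 ≤ a → 0 ≤ b →
      IntervalIntegrable (fun s => Real.exp (-(2 * (t - s))) * σ s ^ 2) volume a b := by
    intro t a b ha hb
    refine ContinuousOn.intervalIntegrable ?_
    exact ContinuousOn.mul (by fun_prop) (hc2.mono (hsub a b ha hb))
  have le1 : ∀ t a b : ℝ, 0 ≤ a → a ≤ b → b ≤ t →
      ∫ s in a..b, Real.exp (-(2 * (t - s))) * σ s ^ 2 ≤ ∫ s in a..b, σ s ^ 2 := by
    intro t a b ha hab hbt
    refine intervalIntegral.integral_mono_on hab (i2 t a b ha (ha.trans hab))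
      (i1 a b ha (ha.trans hab)) ?_
    intro s hs
    have : Real.exp (-(2 * (t - s))) ≤ 1 := Real.exp_le_one_iff.2 (by linarith [hs.2])
    nlinarith [sq_nonneg (σ s)]
  have nn : ∀ t : ℝ, 0 ≤ t → 0 ≤ ∫ s in (0 : ℝ)..t, Real.exp (-(2 * (t - s))) * σ s ^ 2 :=
    fun t ht => intervalIntegral.integral_nonneg ht (fun s _ => by positivity)
  have he : Real.exp (-2) ≤ 1 / 4 := by
    have h1 : (2 : ℝ) ≤ Real.exp 1 := by linarith [Real.add_one_le_exp (1 : ℝ)]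
    have h2 : Real.exp 2 = Real.exp 1 * Real.exp 1 := by rw [← Real.exp_add]; norm_num
    rw [Real.exp_neg, one_div]
    apply inv_anti₀ (by norm_num)
    nlinarith
  apply aux_G
  · intro t ht
    exact mul_nonneg (Real.log_nonneg ht) (nn t (by linarith))
  · intro T hT
    refine ⟨Real.log (T + 1) * ∫ s in (0 : ℝ)..(T + 1), σ s ^ 2, fun t ht => ?_⟩
    have ht1 : 1 ≤ t := hT.trans ht.1
    apply mul_le_mul (Real.log_le_log (by linarith) ht.2) _ (nn t (by linarith))
      (Real.log_nonneg (by linarith))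
    refine (le1 t 0 t le_rfl (by linarith) le_rfl).trans ?_
    have := intervalIntegral.integral_add_adjacent_intervals
      (i1 0 t le_rfl (by linarith)) (i1 t (T + 1) (by linarith) (by linarith))
    have h2 : 0 ≤ ∫ s in t..(T + 1), σ s ^ 2 :=
      intervalIntegral.integral_nonneg ht.2 (fun s _ => by positivity)
    linarith
  · intro ε hε
    filter_upwards [h.eventually (gt_mem_nhds (show (0 : ℝ) < ε / 2 by positivity)),
      eventually_ge_atTop 2] with t h1 h2
    have hl : Real.log (t + 1) ≤ 2 * Real.log t := by
      have : Real.log (t ^ 2) = 2 * Real.log t := by rw [Real.log_pow]; norm_num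
      rw [← this]
      exact Real.log_le_log (by linarith) (by nlinarith)
    have hl0 : 0 ≤ Real.log t := Real.log_nonneg (by linarith)
    have hsplit := intervalIntegral.integral_add_adjacent_intervals
      (i2 (t + 1) 0 t le_rfl (by linarith)) (i2 (t + 1) t (t + 1) (by linarith) (by linarith))
    have hA : ∫ s in (0 : ℝ)..t, Real.exp (-(2 * (t + 1 - s))) * σ s ^ 2
        = Real.exp (-2) * ∫ s in (0 : ℝ)..t, Real.exp (-(2 * (t - s))) * σ s ^ 2 := by
      rw [← intervalIntegral.integral_const_mul]
      congr 1
      ext s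
      rw [← mul_assoc, ← Real.exp_add]
      congr 2
      ring
    have hB := le1 (t + 1) t (t + 1) (by linarith) (by linarith) le_rfl
    have hF := nn t (by linarith)
    have hF1 := nn (t + 1) (by linarith)
    have hle : ∫ s in (0 : ℝ)..(t + 1), Real.exp (-(2 * (t + 1 - s))) * σ s ^ 2 ≤
        1 / 4 * (∫ s in (0 : ℝ)..t, Real.exp (-(2 * (t - s))) * σ s ^ 2)
          + ∫ s in t..(t + 1), σ s ^ 2 := by
      rw [← hsplit, hA]
      have := mul_le_mul_of_nonneg_right he hF
      linarith
    have s1 := mul_le_mul_of_nonneg_right hl hF1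
    have s2 := mul_le_mul_of_nonneg_left hle (show 0 ≤ 2 * Real.log t by linarith)
    linarith
end
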